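/- arXiv:2301.00432 — 2 statements merged into one kernel-verified Lean document; each statement's English description precedes it below -/
import Mathlib

section
/- Let d, m be integers with 1 ≤ m ≤ d, and let β be a modulus of continuity. There exists a continuous function f̃ : [0,1]^d → ℝ^m admitting β as a modulus of continuity such that for every ε with 0 < ε < (1/(2√m)) · β(2^{−5}), N^{f̃}_{{0}}(ε) ≥ (16 / Ψ_β(2√m · ε))^m · 2^{−4m·√(|log₂ Ψ_β(2√m · ε)|)}, where 0 denotes the origin in ℝ^m. -/
open MeasureTheory ENNReal

noncomputable section

/-- The closed unit cube `[0,1]^d` in `ℝ^d`. -/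
def unitCube (d : ℕ) : Set (EuclideanSpace ℝ (Fin d)) :=
  {x | ∀ i, x i ∈ Set.Icc (0 : ℝ) 1}

/-- `N^f_W(ε)`: the infimum of the `sdim`-dimensional Hausdorff measure of
`Z^h_W = {x ∈ [0,1]^d : h x ∈ W}` over all continuous `h` with `‖h - f‖_{C⁰} ≤ ε`. -/
def NW (d m : ℕ) (sdim : ℝ) (W : Set (EuclideanSpace ℝ (Fin m)))
    (f : EuclideanSpace ℝ (Fin d) → EuclideanSpace ℝ (Fin m)) (ε : ℝ) : ℝ≥0∞ :=
  ⨅ (h : EuclideanSpace ℝ (Fin d) → EuclideanSpace ℝ (Fin m))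
    (_ : ContinuousOn h (unitCube d))
    (_ : ∀ x ∈ unitCube d, dist (h x) (f x) ≤ ε),
    μH[sdim] {x ∈ unitCube d | h x ∈ W}

/-- `β : [0,∞) → [0,∞)` is a modulus of continuity: increasing, subadditive,
`β 0 = 0` and `β(δ) → 0` as `δ → 0+`. -/
def IsModulus (β : ℝ → ℝ) : Prop :=
  (∀ s, 0 ≤ s → 0 ≤ β s) ∧
  MonotoneOn β (Set.Ici 0) ∧
  (∀ s t : ℝ, 0 ≤ s → 0 ≤ t → β (s + t) ≤ β s + β t) ∧
  β 0 = 0 ∧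
  Filter.Tendsto β (nhdsWithin 0 (Set.Ioi 0)) (nhds 0)

/-- `Ψ_β(s) = sup {δ ≥ 0 : β δ ≤ s}`. -/
def Psi (β : ℝ → ℝ) (s : ℝ) : ℝ :=
  sSup {δ : ℝ | 0 ≤ δ ∧ β δ ≤ s}

/-!
Along the first `m` coordinates the function `f` oscillates at infinitely many scales: block `l`
consists of `2 ^ (l ^ 2) + 1` points with spacing `r = 2 ^ (-(l + 1) ^ 2)` at which the coordinates
of `f` alternate between values `≥ β r / (2√m)` and `≤ -β r / (2√m)`. If this exceeds `ε`, every
continuous `h` with `‖h - f‖ ≤ ε` still alternates there, so by the Poincaré–Miranda theorem `h`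
vanishes somewhere on each slice of each of the `(2 ^ (l ^ 2)) ^ m` cells between these points;
projecting onto the last `d - m` coordinates, each cell contributes measure at least `1`. For
`ρ = Ψ_β (2√m ε)` and `s = √|log₂ ρ|` choose `l` with `l + 1 < s ≤ l + 2`: then `ρ < r`, whence
`2√m ε < β r`, and `(16 / ρ) * 2 ^ (-4 s) = 2 ^ ((s - 2) ^ 2) ≤ 2 ^ (l ^ 2)`.

The Poincaré–Miranda theorem follows from Brouwer's, which is proved after Milnor and Rogers: if
`f` is `C¹` and the identity on the frontier of a compact set `B`, then with `w = f - id` the map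
`id + t w` is for small `t` an orientation-preserving bijection of `B`, so the polynomial
`t ↦ ∫_B det (id + t Dw)` is constant; at `t = 1` it would vanish for a retraction onto a sphere.
-/

open Filter Set Topology NNReal Module

section PolynomialFamilies

open Polynomial

theorem integral_eval_eq_of_forall_mem_finset {α : Type*} [MeasurableSpace α] {μ : Measure α}
    {p : α → ℝ[X]} {n : ℕ} (hdeg : ∀ x, (p x).natDegree ≤ n)
    (hint : ∀ t, Integrable (fun x => (p x).eval t) μ)
    {T : Finset ℝ} (hT : n < T.card) {c : ℝ} (hc : ∀ t ∈ T, ∫ x, (p x).eval t ∂μ = c) (t : ℝ) :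
    ∫ x, (p x).eval t ∂μ = c := by
  have hinj : InjOn id (T : Set ℝ) := injOn_id _
  have hlagrange (x : α) :
      (p x).eval t = ∑ s ∈ T, (p x).eval s * (Lagrange.basis T id s).eval t := by
    have hdegT : (p x).degree < T.card :=
      degree_le_natDegree.trans_lt (Nat.cast_lt.2 ((hdeg x).trans_lt hT))
    conv_lhs => rw [Lagrange.eq_interpolate hinj hdegT]
    simp [Lagrange.interpolate_apply, eval_finsetSum]
  calc ∫ x, (p x).eval t ∂μ
      = ∑ s ∈ T, (∫ x, (p x).eval s ∂μ) * (Lagrange.basis T id s).eval t := by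
        simp_rw [hlagrange]
        rw [integral_finsetSum _ fun s _ => (hint s).mul_const _]
        simp_rw [integral_mul_const]
    _ = c * (∑ s ∈ T, Lagrange.basis T id s).eval t := by
        rw [eval_finsetSum, Finset.mul_sum]
        exact Finset.sum_congr rfl fun s hs => by rw [hc s hs]
    _ = c := by
        rw [Lagrange.sum_basis hinj (Finset.card_pos.1 (n.zero_le.trans_lt hT)), eval_one, mul_one]

theorem exists_polynomial_eval_eq_det_one_add_smul {R M : Type*} [CommRing R] [Nontrivial R]
    [AddCommGroup M] [Module R M] [Module.Free R M] [Module.Finite R M] (A : M →ₗ[R] M) :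
    ∃ p : R[X], p.natDegree ≤ finrank R M ∧ ∀ t, p.eval t = LinearMap.det (1 + t • A) := by
  classical
  let b := Module.finBasis R M
  refine ⟨_, (natDegree_det_X_add_C_le (LinearMap.toMatrix b b A) 1).trans_eq
    (Fintype.card_fin _), fun t => ?_⟩
  rw [← LinearMap.det_toMatrix b, map_add, map_smul, LinearMap.toMatrix_one, add_comm,
    ← coe_evalRingHom, RingHom.map_det]
  congr 1
  generalize LinearMap.toMatrix b b A = N
  ext i j
  rcases eq_or_ne i j with rfl | hij
  · simp [mul_comm t]
  · simp [hij, mul_comm t]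

end PolynomialFamilies

section NormedSpace

variable {E F : Type*} [NormedAddCommGroup E] [NormedSpace ℝ E]

theorem exists_mem_segment_inter_frontier {s : Set E} (hs : IsClosed s) {x y : E} (hx : x ∈ s)
    (hy : y ∉ s) : (segment ℝ x y ∩ frontier s).Nonempty := by
  by_contra hempty
  have hcover : segment ℝ x y ⊆ interior s ∪ sᶜ := fun z hz => by
    by_contra hz'
    rw [mem_union, not_or, notMem_compl_iff] at hz'
    exact hempty ⟨z, hz, subset_closure hz'.2, hz'.1⟩
  have hx_int : x ∈ interior s :=
    (hcover (left_mem_segment ℝ x y)).resolve_right fun hxs => hxs hx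
  obtain ⟨z, -, hz_int, hz_compl⟩ := (convex_segment x y).isPreconnected _ _ isOpen_interior
    hs.isOpen_compl hcover ⟨x, left_mem_segment ℝ x y, hx_int⟩ ⟨y, right_mem_segment ℝ x y, hy⟩
  exact hz_compl (interior_subset hz_int)

theorem lipschitzWith_indicator [PseudoEMetricSpace F] [Zero F] {s : Set E} (hs : IsClosed s)
    {K : ℝ≥0} {w : E → F} (hw : LipschitzOnWith K w s) (hw0 : ∀ x ∈ frontier s, w x = 0) :
    LipschitzWith K (s.indicator w) := by
  have hcross {x y : E} (hx : x ∈ s) (hy : y ∉ s) :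
      edist (s.indicator w x) (s.indicator w y) ≤ K * edist x y := by
    obtain ⟨z, hz, hz_front⟩ := exists_mem_segment_inter_frontier hs hx hy
    have hz_mem : z ∈ s := hs.frontier_subset hz_front
    have hxz : edist x z ≤ edist x y := by
      rw [edist_dist, edist_dist]
      refine ENNReal.ofReal_le_ofReal ?_
      linarith [dist_add_dist_of_mem_segment hz, dist_nonneg (x := z) (y := y)]
    calc edist (s.indicator w x) (s.indicator w y) = edist (w x) (w z) := by
          rw [indicator_of_mem hx, indicator_of_notMem hy, hw0 z hz_front]
      _ ≤ K * edist x z := hw hx hz_mem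
      _ ≤ K * edist x y := by gcongr
  intro x y
  by_cases hx : x ∈ s <;> by_cases hy : y ∈ s
  · simpa [hx, hy] using hw hx hy
  · exact hcross hx hy
  · rw [edist_comm, edist_comm x]; exact hcross hy hx
  · simp [hx, hy]

theorem bijective_add_of_lipschitzWith [CompleteSpace E] {K : ℝ≥0} (hK : K < 1) {u : E → E}
    (hu : LipschitzWith K u) : Function.Bijective fun x => x + u x := by
  have happrox : ApproximatesLinearOn (fun x => x + u x)
      (ContinuousLinearEquiv.refl ℝ E : E →L[ℝ] E) univ K := fun x _ y _ => by
    simpa [add_sub_add_comm] using hu.norm_sub_le x y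
  have hK' : Subsingleton E ∨
      K < ‖((ContinuousLinearEquiv.refl ℝ E).symm : E →L[ℝ] E)‖₊⁻¹ := by
    rcases subsingleton_or_nontrivial E with h | h
    · exact .inl h
    · refine .inr ?_
      simpa using hK
  exact ⟨injOn_univ.1 (happrox.injOn hK'), happrox.surjective hK'⟩

theorem bijOn_add_smul_of_frontier_eq_zero [CompleteSpace E] {B : Set E} {w : E → E}
    (hB : IsClosed B) {K : ℝ≥0} (hw : LipschitzOnWith K w B) (hw0 : ∀ x ∈ frontier B, w x = 0)
    {t : ℝ} (ht : ‖t‖₊ * K < 1) :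
    BijOn (fun x => x + t • w x) B B := by
  have hlip : LipschitzWith (‖t‖₊ * K) fun x => t • B.indicator w x :=
    (lipschitzWith_smul t).comp (lipschitzWith_indicator hB hw hw0)
  have hbij := bijective_add_of_lipschitzWith ht hlip
  have hcompl : (fun x => x + t • B.indicator w x) '' Bᶜ = Bᶜ :=
    (image_congr fun x hx => by simp [indicator_of_notMem hx]).trans (image_id' _)
  have himage : (fun x => x + t • B.indicator w x) '' B = B :=
    compl_injective ((image_compl_eq hbij).symm.trans hcompl)
  have hbijOn : BijOn (fun x => x + t • B.indicator w x) B B :=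
    ⟨image_subset_iff.1 himage.subset, hbij.injective.injOn, himage.superset⟩
  exact hbijOn.congr fun x hx => by simp [hx]

theorem eventually_forall_det_one_add_smul_pos {X : Type*} [TopologicalSpace X] {K : Set X}
    (hK : IsCompact K) {A : X → E →L[ℝ] E} (hA : Continuous A) :
    ∀ᶠ t : ℝ in 𝓝 0, ∀ x ∈ K, 0 < (1 + t • A x).det := by
  have hcont : Continuous fun z : ℝ × X => (1 + z.1 • A z.2).det :=
    ContinuousLinearMap.continuous_det.comp (by fun_prop)
  refine hK.eventually_forall_of_forall_eventually fun x _ =>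
    hcont.continuousAt.eventually (lt_mem_nhds ?_)
  simp [ContinuousLinearMap.det]

end NormedSpace

section Volume

variable {E : Type*} [NormedAddCommGroup E] [NormedSpace ℝ E] [FiniteDimensional ℝ E]
  [MeasurableSpace E] [BorelSpace E] (μ : Measure E) [μ.IsAddHaarMeasure] {B : Set E} {w f : E → E}

theorem eventually_setIntegral_det_one_add_smul_fderiv_eq (hB : IsCompact B) (hw : ContDiff ℝ 1 w)
    (hw0 : ∀ x ∈ frontier B, w x = 0) :
    ∀ᶠ t : ℝ in 𝓝 0, ∫ x in B, (1 + t • fderiv ℝ w x).det ∂μ = μ.real B := by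
  obtain ⟨K, hK⟩ :=
    (hw.locallyLipschitz.locallyLipschitzOn (s := B)).exists_lipschitzOnWith_of_compact hB
  have htK : ∀ᶠ t : ℝ in 𝓝 0, ‖t‖₊ * K < 1 := by
    have : Continuous fun t : ℝ => ‖t‖₊ * K := by fun_prop
    exact this.continuousAt.eventually (gt_mem_nhds (by simp))
  filter_upwards [htK, eventually_forall_det_one_add_smul_pos hB
    (hw.continuous_fderiv one_ne_zero)] with t htK hdet_pos
  have hbij := bijOn_add_smul_of_frontier_eq_zero hB.isClosed hK hw0 htK
  have hderiv (x : E) (_ : x ∈ B) :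
      HasFDerivWithinAt (fun x => x + t • w x) (1 + t • fderiv ℝ w x) B x :=
    ((hasFDerivAt_id x).add
      ((hw.differentiable one_ne_zero x).hasFDerivAt.const_smul t)).hasFDerivWithinAt
  have hchange := integral_image_eq_integral_abs_det_fderiv_smul μ hB.measurableSet hderiv
    hbij.injOn fun _ => (1 : ℝ)
  calc ∫ x in B, (1 + t • fderiv ℝ w x).det ∂μ
      = ∫ x in B, |(1 + t • fderiv ℝ w x).det| • (1 : ℝ) ∂μ :=
        setIntegral_congr_fun hB.measurableSet fun x hx => by simp [abs_of_pos (hdet_pos x hx)]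
    _ = μ.real B := by rw [← hchange, hbij.image_eq]; simp

theorem setIntegral_det_fderiv_eq_of_eq_self_on_frontier (hB : IsCompact B) (hf : ContDiff ℝ 1 f)
    (hfB : ∀ x ∈ frontier B, f x = x) : ∫ x in B, (fderiv ℝ f x).det ∂μ = μ.real B := by
  have hw : ContDiff ℝ 1 fun x => f x - x := hf.sub contDiff_id
  set A : E → E →L[ℝ] E := fderiv ℝ fun x => f x - x with hA
  obtain ⟨τ, hτ, hsmall⟩ := Metric.eventually_nhds_iff.1 <|
    eventually_setIntegral_det_one_add_smul_fderiv_eq μ hB hw fun x hx => sub_eq_zero.2 (hfB x hx)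
  choose p hdeg hp using fun x => exists_polynomial_eval_eq_det_one_add_smul (A x : E →ₗ[ℝ] E)
  replace hp (x : E) (t : ℝ) : (p x).eval t = (1 + t • A x).det := hp x t
  have hint (t : ℝ) : IntegrableOn (fun x => (p x).eval t) B μ := by
    simp_rw [hp]
    have hAcont : Continuous A := hw.continuous_fderiv one_ne_zero
    exact (ContinuousLinearMap.continuous_det.comp
      (by fun_prop : Continuous fun x => 1 + t • A x)).continuousOn.integrableOn_compact hB
  obtain ⟨T, hTsub, hTcard⟩ :=
    (Ioo_infinite hτ).exists_subset_card_eq (finrank ℝ E + 1)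
  have hT (t : ℝ) (ht : t ∈ T) : ∫ x in B, (p x).eval t ∂μ = μ.real B := by
    simp_rw [hp]
    have htτ := hTsub ht
    exact hsmall (by rw [dist_zero_right, Real.norm_of_nonneg htτ.1.le]; exact htτ.2)
  have hone (x : E) : (fderiv ℝ f x).det = (p x).eval 1 := by
    have hAx : A x = fderiv ℝ f x - 1 := by
      rw [hA, fderiv_fun_sub (hf.differentiable one_ne_zero x) differentiableAt_fun_id,
        fderiv_fun_id]
      rfl
    rw [hp, hAx, one_smul, add_sub_cancel]
  simp_rw [hone]
  exact integral_eval_eq_of_forall_mem_finset hdeg hint (by omega) hT 1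

end Volume

section Brouwer

variable {E : Type*} [NormedAddCommGroup E] [InnerProductSpace ℝ E] [FiniteDimensional ℝ E]

theorem det_eq_zero_of_norm_eventuallyEq_const {r : E → E} {f' : E →L[ℝ] E} {x : E} {R : ℝ}
    (hR : R ≠ 0) (hr : HasFDerivAt r f' x) (hnorm : ∀ᶠ y in 𝓝 x, ‖r y‖ = R) : f'.det = 0 := by
  have horth (z : E) : inner ℝ (r x) (f' z) = 0 := by
    have hconst : (fun y => ‖r y‖ ^ 2) =ᶠ[𝓝 x] fun _ => R ^ 2 :=
      hnorm.mono fun y hy => congrArg (· ^ 2) hy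
    have hzero := hr.norm_sq.unique ((hasFDerivAt_const (R ^ 2) x).congr_of_eventuallyEq hconst)
    simpa using congrArg (fun L : E →L[ℝ] ℝ => L z) hzero
  by_contra hdet
  obtain ⟨z, hz⟩ := (LinearMap.equivOfDetNeZero (f' : E →ₗ[ℝ] E) hdet).surjective (r x)
  have hself : inner ℝ (r x) (r x) = 0 := by
    rw [← horth z]; exact congrArg _ hz.symm
  rw [real_inner_self_eq_norm_sq, hnorm.self_of_nhds] at hself
  exact hR (pow_eq_zero_iff two_ne_zero |>.1 hself)

theorem exists_eq_zero_of_eq_self_on_sphere {f : E → E} {R : ℝ} (hR : 0 < R)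
    (hf : ContDiff ℝ 1 f) (hfR : ∀ x, ‖x‖ = R → f x = x) : ∃ x, f x = 0 := by
  by_contra! hne
  let _ : MeasurableSpace E := borel E
  have _ : BorelSpace E := ⟨rfl⟩
  let r : E → E := fun x => (R / ‖f x‖) • f x
  have hr : ContDiff ℝ 1 r :=
    (contDiff_const.div (hf.norm ℝ hne) fun x => norm_ne_zero_iff.2 (hne x)).smul hf
  have hr_norm (x : E) : ‖r x‖ = R := by
    rw [norm_smul, norm_div, norm_norm, div_mul_cancel₀ _ (norm_ne_zero_iff.2 (hne x)),
      Real.norm_of_nonneg hR.le]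
  have hr_frontier : ∀ x ∈ frontier (Metric.closedBall (0 : E) R), r x = x := fun x hx => by
    have hxR : ‖x‖ = R := by simpa using Metric.frontier_closedBall_subset_sphere hx
    simp only [r, hfR x hxR, hxR, div_self hR.ne', one_smul]
  have hvol := setIntegral_det_fderiv_eq_of_eq_self_on_frontier (volume : Measure E)
    (isCompact_closedBall (0 : E) R) hr hr_frontier
  have hdet (x : E) : (fderiv ℝ r x).det = 0 :=
    det_eq_zero_of_norm_eventuallyEq_const hR.ne'
      (hr.differentiable one_ne_zero x).hasFDerivAt (.of_forall hr_norm)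
  simp_rw [hdet, integral_zero] at hvol
  exact (ENNReal.toReal_pos (Metric.measure_closedBall_pos volume (0 : E) hR).ne'
    measure_closedBall_lt_top.ne).ne hvol

theorem exists_fixedPoint_of_contDiff_of_bounded {g : E → E}
    (hg : ContDiff ℝ 1 g) {C : ℝ} (hC : ∀ x, ‖g x‖ ≤ C) : ∃ x, g x = x := by
  have hC0 : 0 ≤ C := (norm_nonneg _).trans (hC 0)
  -- `x - χ x • g x` is the identity on the sphere of radius `C + 2`, and its zeros have norm at
  -- most `C`, where `χ = 1`.
  let χ : ContDiffBump (0 : E) := ⟨C + 1, C + 2, by linarith, by linarith⟩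
  have hχ_far (x : E) (hx : ‖x‖ = C + 2) : x - χ x • g x = x := by
    rw [χ.zero_of_le_dist (by simp [χ, hx]), zero_smul, sub_zero]
  obtain ⟨x, hx⟩ := exists_eq_zero_of_eq_self_on_sphere (by linarith : 0 < C + 2)
    (contDiff_id.sub (χ.contDiff.smul hg)) hχ_far
  have hx_eq : x = χ x • g x := sub_eq_zero.1 hx
  have hx_norm : ‖x‖ ≤ C := by
    rw [hx_eq, norm_smul, Real.norm_of_nonneg χ.nonneg]
    exact (mul_le_of_le_one_left (norm_nonneg _) χ.le_one).trans (hC x)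
  have hχ_one : χ x = 1 := χ.one_of_mem_closedBall (by simp [χ]; linarith)
  exact ⟨x, by rw [hχ_one, one_smul] at hx_eq; exact hx_eq.symm⟩

theorem exists_fixedPoint_of_continuous_of_bounded {g : E → E}
    (hg : Continuous g) {C : ℝ} (hC : ∀ x, ‖g x‖ ≤ C) : ∃ x, g x = x := by
  by_contra! hne
  obtain ⟨g', hg', happrox, -⟩ := hg.exists_contDiff_approx 1
    (ε := fun x => min 1 (dist x (g x))) (by fun_prop)
    fun x => lt_min one_pos (dist_pos.2 (hne x).symm)
  have hbound (x : E) : ‖g' x‖ ≤ C + 1 := by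
    have hclose : ‖g' x - g x‖ ≤ 1 := by
      rw [← dist_eq_norm]; exact (happrox x).le.trans (min_le_left _ _)
    linarith [norm_le_norm_add_norm_sub' (g' x) (g x), hC x]
  obtain ⟨x, hx⟩ := exists_fixedPoint_of_contDiff_of_bounded hg' hbound
  have := (happrox x).trans_le (min_le_right _ _)
  rw [hx] at this
  exact lt_irrefl _ this

end Brouwer

section PoincareMiranda

variable {ι : Type*} [Finite ι] {a b : ι → ℝ} {h : (ι → ℝ) → ι → ℝ}

theorem exists_mem_Icc_eq_zero_of_faces (hab : a ≤ b) (hc : ContinuousOn h (Icc a b))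
    (ha : ∀ x ∈ Icc a b, ∀ i, x i = a i → h x i ≤ 0)
    (hb : ∀ x ∈ Icc a b, ∀ i, x i = b i → 0 ≤ h x i) : ∃ x ∈ Icc a b, h x = 0 := by
  cases nonempty_fintype ι
  -- With `P` the projection onto the box, a fixed point `z` of `z ↦ P z - h (P z)` lies in the box:
  -- leaving it through a face would contradict the sign of `h` there.
  let P : (ι → ℝ) → ι → ℝ := fun x i => max (a i) (min (b i) (x i))
  have hP : Continuous P := by fun_prop
  have hP_mem (x : ι → ℝ) : P x ∈ Icc a b :=
    ⟨fun i => le_max_left _ _, fun i => max_le (hab i) (min_le_left _ _)⟩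
  let e : EuclideanSpace ℝ ι ≃L[ℝ] (ι → ℝ) := EuclideanSpace.equiv ι ℝ
  have hstep : ContinuousOn (fun y => e.symm (y - h y)) (Icc a b) :=
    e.symm.continuous.comp_continuousOn (continuousOn_id.sub hc)
  obtain ⟨C, hC⟩ := isCompact_Icc.exists_bound_of_continuousOn hstep
  obtain ⟨z, hz⟩ := exists_fixedPoint_of_continuous_of_bounded
    (hstep.comp_continuous (hP.comp e.continuous) fun z => hP_mem (e z))
    fun z => hC _ (hP_mem (e z))
  have hx : P (e z) - h (P (e z)) = e z := e.symm_apply_eq.1 hz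
  refine ⟨P (e z), hP_mem _, funext fun i => ?_⟩
  have hxi : P (e z) i - h (P (e z)) i = e z i := congrFun hx i
  have hPi : P (e z) i = max (a i) (min (b i) (e z i)) := rfl
  change h (P (e z)) i = 0
  rcases lt_or_ge (e z i) (a i) with hlt | hge
  · have hface : P (e z) i = a i := by rw [hPi, max_eq_left ((min_le_right _ _).trans hlt.le)]
    linarith [ha _ (hP_mem (e z)) i hface]
  rcases lt_or_ge (b i) (e z i) with hlt' | hle
  · have hface : P (e z) i = b i := by rw [hPi, min_eq_left hlt'.le, max_eq_right (hab i)]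
    linarith [hb _ (hP_mem (e z)) i hface]
  · rw [hPi, min_eq_right hle, max_eq_right hge] at hxi
    linarith

theorem exists_mem_pi_Ioo_eq_zero_of_faces (hab : a ≤ b) (hc : ContinuousOn h (Icc a b))
    (σ : ι → ℝ) (ha : ∀ x ∈ Icc a b, ∀ i, x i = a i → σ i * h x i < 0)
    (hb : ∀ x ∈ Icc a b, ∀ i, x i = b i → 0 < σ i * h x i) :
    ∃ x ∈ univ.pi fun i => Ioo (a i) (b i), h x = 0 := by
  obtain ⟨x, hx, hx0⟩ := exists_mem_Icc_eq_zero_of_faces (h := fun x => σ * h x) hab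
    (continuousOn_const.mul hc) (fun x hx i hi => (ha x hx i hi).le)
    (fun x hx i hi => (hb x hx i hi).le)
  have hzero (i : ι) : σ i * h x i = 0 := congrFun hx0 i
  have hσ (i : ι) : σ i ≠ 0 := left_ne_zero_of_mul (ha a (left_mem_Icc.2 hab) i rfl).ne
  refine ⟨x, fun i _ => ⟨(hx.1 i).lt_of_ne fun hi => ?_, (hx.2 i).lt_of_ne fun hi => ?_⟩, ?_⟩
  · exact (ha x hx i hi.symm).ne (hzero i)
  · exact (hb x hx i hi).ne' (hzero i)
  · exact funext fun i => (mul_eq_zero.1 (hzero i)).resolve_left (hσ i)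

end PoincareMiranda

section ZeroSets

theorem one_le_hausdorffMeasure_of_Icc_subset_image {X ι : Type*} [EMetricSpace X]
    [MeasurableSpace X] [BorelSpace X] [Fintype ι] {S : Set X} {q : X → ι → ℝ}
    (hq : LipschitzWith 1 q) (hS : Icc 0 1 ⊆ q '' S) : 1 ≤ μH[Fintype.card ι] S :=
  calc (1 : ℝ≥0∞) = μH[Fintype.card ι] (Icc (0 : ι → ℝ) 1) := by
        rw [hausdorffMeasure_pi_real, Real.volume_Icc_pi]
        simp
    _ ≤ μH[Fintype.card ι] (q '' S) := measure_mono hS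
    _ ≤ μH[Fintype.card ι] S := by
        simpa using hq.hausdorffMeasure_image_le (Nat.cast_nonneg (Fintype.card ι)) S

variable {m n N : ℕ} {p : ℕ → ℝ}

/-- The open cell with multi-index `J` of the grid that the breakpoints `p 0 < p 1 < ⋯` induce in
the first `m` coordinates of `ℝ^(m+n)`; it is unbounded in the remaining `n` coordinates. -/
def gridCell (p : ℕ → ℝ) (n : ℕ) (J : Fin m → ℕ) : Set (EuclideanSpace ℝ (Fin (m + n))) :=
  (fun x i => x (Fin.castAdd n i)) ⁻¹' univ.pi fun i => Ioo (p (J i)) (p (J i + 1))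

theorem isOpen_gridCell (J : Fin m → ℕ) : IsOpen (gridCell p n J) :=
  (isOpen_set_pi finite_univ fun _ _ => isOpen_Ioo).preimage (by fun_prop)

theorem pairwise_disjoint_gridCell (hp : Monotone p) :
    Pairwise (Function.onFun Disjoint (gridCell (m := m) p n)) := fun _ _ hJ =>
  have ⟨i, hi⟩ := Function.ne_iff.1 hJ
  (disjoint_univ_pi.2 ⟨i, hp.pairwise_disjoint_on_Ioo_succ hi⟩).preimage _

theorem toLp_append_mem_unitCube {x : Fin m → ℝ} {y : Fin n → ℝ} (hx : x ∈ Icc 0 1)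
    (hy : y ∈ Icc 0 1) : WithLp.toLp 2 (Fin.append x y) ∈ unitCube (m + n) :=
  Fin.addCases (fun i => by simpa using ⟨hx.1 i, hx.2 i⟩) fun i => by simpa using ⟨hy.1 i, hy.2 i⟩

variable {h : EuclideanSpace ℝ (Fin (m + n)) → EuclideanSpace ℝ (Fin m)}

theorem exists_toLp_append_mem_gridCell_eq_zero (hp : StrictMono p)
    (hp01 : ∀ j ≤ N, p j ∈ Icc (0 : ℝ) 1) (hc : ContinuousOn h (unitCube (m + n)))
    (hsign : ∀ j ≤ N, ∀ x ∈ unitCube (m + n), ∀ i, x (Fin.castAdd n i) = p j →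
      0 < (-1) ^ j * h x i)
    {J : Fin m → ℕ} (hJ : ∀ i, J i < N) {y : Fin n → ℝ} (hy : y ∈ Icc 0 1) :
    ∃ x : Fin m → ℝ, WithLp.toLp 2 (Fin.append x y) ∈
      gridCell p n J ∩ {z ∈ unitCube (m + n) | h z = 0} := by
  have hbox (x : Fin m → ℝ) (hx : x ∈ Icc (fun i => p (J i)) fun i => p (J i + 1)) :
      WithLp.toLp 2 (Fin.append x y) ∈ unitCube (m + n) :=
    toLp_append_mem_unitCube ⟨fun i => (hp01 _ (hJ i).le).1.trans (hx.1 i),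
      fun i => (hx.2 i).trans (hp01 _ (hJ i)).2⟩ hy
  have happend : Continuous fun x : Fin m → ℝ => WithLp.toLp 2 (Fin.append x y) :=
    (PiLp.continuous_toLp 2 _).comp <| continuous_pi <|
      Fin.addCases (fun i => by simpa using continuous_apply i)
        fun i => by simpa using continuous_const
  obtain ⟨x, hx, hx0⟩ := exists_mem_pi_Ioo_eq_zero_of_faces
    (h := fun x => (h (WithLp.toLp 2 (Fin.append x y))).ofLp) (fun i => (hp (J i).lt_succ_self).le)
    ((PiLp.continuous_ofLp 2 _).comp_continuousOn (hc.comp happend.continuousOn hbox))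
    (fun i => (-1) ^ (J i + 1))
    (fun x hx i hi => by
      have := hsign (J i) (hJ i).le _ (hbox x hx) i (by simpa using hi)
      rw [pow_succ]
      linarith)
    (fun x hx i hi => hsign (J i + 1) (hJ i) _ (hbox x hx) i (by simpa using hi))
  refine ⟨x, fun i hi => by simpa using hx i hi, hbox x ⟨fun i => (hx i trivial).1.le,
    fun i => (hx i trivial).2.le⟩, ?_⟩
  ext i
  exact congrFun hx0 i

theorem one_le_hausdorffMeasure_gridCell_inter_zeros (hp : StrictMono p)
    (hp01 : ∀ j ≤ N, p j ∈ Icc (0 : ℝ) 1) (hc : ContinuousOn h (unitCube (m + n)))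
    (hsign : ∀ j ≤ N, ∀ x ∈ unitCube (m + n), ∀ i, x (Fin.castAdd n i) = p j →
      0 < (-1) ^ j * h x i)
    {J : Fin m → ℕ} (hJ : ∀ i, J i < N) :
    1 ≤ μH[n] (gridCell p n J ∩ {x ∈ unitCube (m + n) | h x = 0}) := by
  have hproj : LipschitzWith 1
      fun (x : EuclideanSpace ℝ (Fin (m + n))) i => x (Fin.natAdd m i) := by
    refine LipschitzWith.mk_one fun x y => (dist_pi_le_iff dist_nonneg).2 fun i => ?_
    rw [dist_eq_norm, dist_eq_norm]
    exact PiLp.norm_apply_le (x - y) (Fin.natAdd m i)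
  have hfull := one_le_hausdorffMeasure_of_Icc_subset_image hproj
    (S := gridCell p n J ∩ {x ∈ unitCube (m + n) | h x = 0}) fun y hy =>
      have ⟨x, hx⟩ := exists_toLp_append_mem_gridCell_eq_zero hp hp01 hc hsign hJ hy
      ⟨_, hx, funext fun i => by simp⟩
  rwa [Fintype.card_fin] at hfull

theorem natCast_pow_le_hausdorffMeasure_zeros (hp : StrictMono p)
    (hp01 : ∀ j ≤ N, p j ∈ Icc (0 : ℝ) 1) (hc : ContinuousOn h (unitCube (m + n)))
    (hsign : ∀ j ≤ N, ∀ x ∈ unitCube (m + n), ∀ i, x (Fin.castAdd n i) = p j →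
      0 < (-1) ^ j * h x i) :
    ((N ^ m : ℕ) : ℝ≥0∞) ≤ μH[n] {x ∈ unitCube (m + n) | h x = 0} := by
  set Z := {x ∈ unitCube (m + n) | h x = 0}
  let cell (J : Fin m → Fin N) := gridCell p n fun i => (J i : ℕ)
  have hmeas (J : Fin m → Fin N) : MeasurableSet (cell J) := (isOpen_gridCell _).measurableSet
  have hdisj : Pairwise (Function.onFun Disjoint cell) := fun J J' hJ =>
    pairwise_disjoint_gridCell hp.monotone fun heq =>
      hJ (funext fun i => Fin.ext (congrFun heq i))
  calc ((N ^ m : ℕ) : ℝ≥0∞) = ∑ _J : Fin m → Fin N, (1 : ℝ≥0∞) := by simp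
    _ ≤ ∑ J, μH[n].restrict Z (cell J) := Finset.sum_le_sum fun J _ => by
        rw [Measure.restrict_apply (hmeas J)]
        exact one_le_hausdorffMeasure_gridCell_inter_zeros hp hp01 hc hsign fun i => (J i).2
    _ ≤ μH[n].restrict Z univ :=
        sum_measure_le_measure_univ (fun J _ => (hmeas J).nullMeasurableSet)
          fun _ _ _ _ hJ => (hdisj hJ).aedisjoint
    _ = μH[n] Z := Measure.restrict_apply_univ _

theorem natCast_pow_le_NW {f : EuclideanSpace ℝ (Fin (m + n)) → EuclideanSpace ℝ (Fin m)} {ε : ℝ}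
    (hp : StrictMono p) (hp01 : ∀ j ≤ N, p j ∈ Icc (0 : ℝ) 1)
    (hf : ∀ j ≤ N, ∀ x ∈ unitCube (m + n), ∀ i, x (Fin.castAdd n i) = p j →
      ε < (-1) ^ j * f x i) :
    ((N ^ m : ℕ) : ℝ≥0∞) ≤ NW (m + n) m n {0} f ε := by
  refine le_iInf₂ fun h hc => le_iInf fun hclose =>
    natCast_pow_le_hausdorffMeasure_zeros hp hp01 hc fun j hj x hx i hxi => ?_
  have hdist : |(-1) ^ j * (h x i - f x i)| ≤ ε := by
    rw [abs_mul, abs_neg_one_pow, one_mul]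
    exact (PiLp.norm_apply_le (h x - f x) i).trans (dist_eq_norm (h x) (f x) ▸ hclose x hx)
  linarith [hf j hj x hx i hxi, (abs_le.1 hdist).1]

end ZeroSets

section Modulus

variable {β : ℝ → ℝ} {X : Type*} [PseudoMetricSpace X]

/-- The map `f` admits `β` as a modulus of continuity on its whole domain. -/
def HasModulus {Y : Type*} [PseudoMetricSpace Y] (β : ℝ → ℝ) (f : X → Y) : Prop :=
  ∀ x y, dist (f x) (f y) ≤ β (dist x y)

namespace IsModulus

theorem apply_le_apply (hβ : IsModulus β) {s t : ℝ} (hs : 0 ≤ s) (hst : s ≤ t) : β s ≤ β t :=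
  hβ.2.1 hs (hs.trans hst) hst

theorem apply_zero (hβ : IsModulus β) : β 0 = 0 := hβ.2.2.2.1

theorem abs_apply_sub_apply_le (hβ : IsModulus β) {a b t : ℝ} (ha : 0 ≤ a) (hb : 0 ≤ b)
    (hab : |a - b| ≤ t) : |β a - β b| ≤ β t := by
  have hle {u v : ℝ} (hu : 0 ≤ u) (hv : 0 ≤ v) (huv : u - v ≤ t) : β u ≤ β v + β t :=
    (hβ.apply_le_apply hu (by linarith)).trans (hβ.2.2.1 v t hv ((abs_nonneg _).trans hab))
  rw [abs_le] at hab
  exact abs_le.2 ⟨by linarith [hle hb ha (by linarith)], by linarith [hle ha hb hab.2]⟩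

theorem tendsto_nhdsGE_zero (hβ : IsModulus β) : Tendsto β (𝓝[≥] 0) (𝓝 0) := by
  have hright : ContinuousWithinAt β (Ioi 0) 0 := by
    simpa only [ContinuousWithinAt, hβ.apply_zero] using hβ.2.2.2.2
  simpa only [ContinuousWithinAt, hβ.apply_zero] using continuousWithinAt_Ioi_iff_Ici.1 hright

theorem continuous_of_hasModulus (hβ : IsModulus β) {Y : Type*} [PseudoMetricSpace Y] {f : X → Y}
    (hf : HasModulus β f) : Continuous f := by
  refine continuous_iff_continuousAt.2 fun x => tendsto_iff_dist_tendsto_zero.2 ?_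
  have hdist : Tendsto (fun y => dist y x) (𝓝 x) (𝓝[≥] 0) :=
    tendsto_nhdsWithin_iff.2 ⟨tendsto_iff_dist_tendsto_zero.1 tendsto_id,
      .of_forall fun y => dist_nonneg⟩
  exact squeeze_zero (fun _ => dist_nonneg) (fun y => hf y x) (hβ.tendsto_nhdsGE_zero.comp hdist)

theorem hasModulus_toLp_div_sqrt_card (hβ : IsModulus β) {ι κ : Type*} [Fintype ι] [Fintype κ]
    {g : ℝ → ℝ} (hg : HasModulus β g) (e : ι → κ) :
    HasModulus β fun x : EuclideanSpace ℝ κ =>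
      WithLp.toLp 2 fun i => g (x (e i)) / √(Fintype.card ι) := by
  intro x y
  have hcoord (i : ι) : |g (x (e i)) - g (y (e i))| ≤ β (dist x y) :=
    (hg _ _).trans <| hβ.apply_le_apply dist_nonneg <| by
      rw [dist_eq_norm, dist_eq_norm]
      exact PiLp.norm_apply_le (x - y) (e i)
  rw [EuclideanSpace.dist_eq, Real.sqrt_le_left (hβ.1 _ dist_nonneg)]
  calc ∑ i, dist (g (x (e i)) / √(Fintype.card ι)) (g (y (e i)) / √(Fintype.card ι)) ^ 2
      = (∑ i, |g (x (e i)) - g (y (e i))| ^ 2) / Fintype.card ι := by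
        rw [Finset.sum_div]
        refine Finset.sum_congr rfl fun i _ => ?_
        rw [Real.dist_eq, div_sub_div_same, abs_div, div_pow, sq_abs √_,
          Real.sq_sqrt (Nat.cast_nonneg _)]
    _ ≤ β (dist x y) ^ 2 := by
        refine div_le_of_le_mul₀ (Nat.cast_nonneg _) (sq_nonneg _) ?_
        have hsum := Finset.sum_le_card_nsmul Finset.univ _ _ fun i _ =>
          pow_le_pow_left₀ (abs_nonneg _) (hcoord i) 2
        rwa [nsmul_eq_mul, mul_comm] at hsum

theorem mem_upperBounds_sublevel (hβ : IsModulus β) {s δ : ℝ} (hδ : 0 ≤ δ) (hs : s < β δ) :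
    δ ∈ upperBounds {t | 0 ≤ t ∧ β t ≤ s} := fun _ ht =>
  le_of_not_gt fun hlt => (ht.2.trans_lt hs).not_ge (hβ.apply_le_apply hδ hlt.le)

theorem Psi_le (hβ : IsModulus β) {s δ : ℝ} (hδ : 0 ≤ δ) (hs : s < β δ) : Psi β s ≤ δ :=
  Real.sSup_le (hβ.mem_upperBounds_sublevel hδ hs) hδ

theorem Psi_pos (hβ : IsModulus β) {s δ : ℝ} (hs : 0 < s) (hδ : 0 ≤ δ) (hsδ : s < β δ) :
    0 < Psi β s := by
  obtain ⟨t, hts, ht⟩ :=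
    ((hβ.2.2.2.2.eventually_lt_const hs).and self_mem_nhdsWithin).exists
  exact ht.trans_le (le_csSup ⟨δ, hβ.mem_upperBounds_sublevel hδ hsδ⟩ ⟨ht.le, hts.le⟩)

theorem lt_apply_of_Psi_lt (hβ : IsModulus β) {s δ t : ℝ} (hδ : 0 ≤ δ) (hsδ : s < β δ)
    (ht : 0 ≤ t) (hst : Psi β s < t) : s < β t :=
  lt_of_not_ge fun hle =>
    hst.not_ge (le_csSup ⟨δ, hβ.mem_upperBounds_sublevel hδ hsδ⟩ ⟨ht, hle⟩)

end IsModulus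

/-- A function with modulus of continuity `β` that separates `A` from `B`: it is nonnegative on `A`
and nonpositive on `B`, and the larger the farther the two sets are apart. -/
def modulusGap (β : ℝ → ℝ) (A B : Set X) (x : X) : ℝ :=
  (β (Metric.infDist x B) - β (Metric.infDist x A)) / 2

theorem modulusGap_swap (β : ℝ → ℝ) (A B : Set X) (x : X) :
    modulusGap β B A x = -modulusGap β A B x := by
  rw [modulusGap, modulusGap, ← neg_div, neg_sub]

theorem IsModulus.hasModulus_modulusGap (hβ : IsModulus β) (A B : Set X) :
    HasModulus β (modulusGap β A B) := by
  have hinf (S : Set X) (x y : X) :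
      |β (Metric.infDist x S) - β (Metric.infDist y S)| ≤ β (dist x y) :=
    hβ.abs_apply_sub_apply_le Metric.infDist_nonneg Metric.infDist_nonneg <| abs_sub_le_iff.2
      ⟨sub_le_iff_le_add'.2 Metric.infDist_le_infDist_add_dist,
        sub_le_iff_le_add'.2 (dist_comm x y ▸ Metric.infDist_le_infDist_add_dist)⟩
  intro x y
  have hA := abs_le.1 (hinf A x y)
  have hB := abs_le.1 (hinf B x y)
  rw [Real.dist_eq, modulusGap, modulusGap, abs_le]
  constructor <;> linarith [hA.1, hA.2, hB.1, hB.2]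

theorem IsModulus.half_le_modulusGap (hβ : IsModulus β) {A B : Set X} {x : X} {r : ℝ} (hx : x ∈ A)
    (hB : B.Nonempty) (hr : 0 ≤ r) (hxB : ∀ y ∈ B, r ≤ dist x y) :
    β r / 2 ≤ modulusGap β A B x := by
  rw [modulusGap, Metric.infDist_zero_of_mem hx, hβ.apply_zero, sub_zero]
  gcongr
  exact hβ.apply_le_apply hr ((Metric.le_infDist hB).2 fun {y} hy => hxB y hy)

end Modulus

section Blocks

/-- The spacing of the points of block `l`. With the exponent `(l + 1) ^ 2`, roughly `2 ^ (l ^ 2)`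
intervals of this length fit into the dyadic interval `((1/2)^(l+1), (1/2)^l)`. -/
def blockSpacing (l : ℕ) : ℝ := (1 / 2) ^ (l + 1) ^ 2

/-- For `j ≤ 2 ^ (l ^ 2)` these are the points of block `l`, which lies in the dyadic interval
`((1/2)^(l+1), (1/2)^l)`. -/
def blockPoint (l j : ℕ) : ℝ := (1 / 2) ^ (l + 1) + (j + 1) * blockSpacing l

/-- The points of all blocks `l ≥ 1` whose index `j` within the block satisfies `P`. -/
def blockPoints (P : ℕ → Prop) : Set ℝ :=
  {x | ∃ l j, 1 ≤ l ∧ j ≤ 2 ^ l ^ 2 ∧ P j ∧ blockPoint l j = x}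

theorem blockPoint_mem_blockPoints {P : ℕ → Prop} {l j : ℕ} (hl : 1 ≤ l) (hj : j ≤ 2 ^ l ^ 2)
    (hP : P j) : blockPoint l j ∈ blockPoints P :=
  ⟨l, j, hl, hj, hP, rfl⟩

theorem blockSpacing_pos (l : ℕ) : 0 < blockSpacing l := by
  unfold blockSpacing; positivity

theorem blockSpacing_eq_rpow (l : ℕ) : blockSpacing l = 2 ^ (-((l : ℝ) + 1) ^ 2) := by
  rw [blockSpacing, Real.rpow_neg zero_le_two, one_div_pow, one_div]
  norm_cast

theorem strictMono_blockPoint (l : ℕ) : StrictMono (blockPoint l) := fun j j' hj => by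
  have := blockSpacing_pos l
  unfold blockPoint
  gcongr

theorem pow_add_blockSpacing_le_blockPoint (l j : ℕ) :
    (1 / 2) ^ (l + 1) + blockSpacing l ≤ blockPoint l j := by
  unfold blockPoint
  gcongr
  exact le_mul_of_one_le_left (blockSpacing_pos l).le (by simp)

theorem blockPoint_add_blockSpacing_le_pow {l j : ℕ} (hl : 1 ≤ l) (hj : j ≤ 2 ^ l ^ 2) :
    blockPoint l j + blockSpacing l ≤ (1 / 2) ^ l := by
  have hcount : (j + 2 : ℝ) ≤ 2 * 2 ^ l ^ 2 := by
    have htwo : (2 : ℝ) ≤ 2 ^ l ^ 2 := le_self_pow₀ one_le_two (by positivity)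
    have hj' : (j : ℝ) ≤ 2 ^ l ^ 2 := mod_cast hj
    linarith
  have hcancel : (2 : ℝ) ^ l ^ 2 * (1 / 2) ^ l ^ 2 = 1 := by
    rw [← mul_pow, mul_one_div_cancel two_ne_zero, one_pow]
  have hlength : (j + 2) * blockSpacing l ≤ (1 / 2) ^ (l + 1) :=
    calc (j + 2) * blockSpacing l ≤ 2 * 2 ^ l ^ 2 * blockSpacing l := by
          gcongr
          exact (blockSpacing_pos l).le
      _ = (1 / 2) ^ (l + l) := by
          rw [blockSpacing, show (l + 1) ^ 2 = l ^ 2 + (l + l) + 1 by ring,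
            pow_succ (1 / 2 : ℝ), pow_add (1 / 2 : ℝ)]
          linear_combination (1 / 2) ^ (l + l) * hcancel
      _ ≤ (1 / 2) ^ (l + 1) := pow_le_pow_of_le_one (by norm_num) (by norm_num) (by omega)
  calc blockPoint l j + blockSpacing l = (1 / 2) ^ (l + 1) + (j + 2) * blockSpacing l := by
        rw [blockPoint]; ring
    _ ≤ (1 / 2) ^ (l + 1) + (1 / 2) ^ (l + 1) := by gcongr
    _ = (1 / 2) ^ l := by ring

theorem blockPoint_mem_Icc {l j : ℕ} (hl : 1 ≤ l) (hj : j ≤ 2 ^ l ^ 2) :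
    blockPoint l j ∈ Icc (0 : ℝ) 1 := by
  have hspacing := blockSpacing_pos l
  have hpow : (1 / 2 : ℝ) ^ l ≤ 1 := pow_le_one₀ (by norm_num) (by norm_num)
  refine ⟨by unfold blockPoint; positivity, ?_⟩
  linarith [blockPoint_add_blockSpacing_le_pow hl hj]

theorem blockPoint_add_blockSpacing_le_of_lt {l l' j j' : ℕ} (hl' : 1 ≤ l') (hj' : j' ≤ 2 ^ l' ^ 2)
    (hll' : l < l') :
    blockPoint l' j' + blockSpacing l' ≤ blockPoint l j - blockSpacing l := by
  have hpow : (1 / 2 : ℝ) ^ l' ≤ (1 / 2) ^ (l + 1) :=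
    pow_le_pow_of_le_one (by norm_num) (by norm_num) hll'
  linarith [blockPoint_add_blockSpacing_le_pow hl' hj', pow_add_blockSpacing_le_blockPoint l j]

theorem blockSpacing_le_dist_blockPoint {l l' j j' : ℕ} (hl : 1 ≤ l) (hl' : 1 ≤ l')
    (hj : j ≤ 2 ^ l ^ 2) (hj' : j' ≤ 2 ^ l' ^ 2) (hne : j ≠ j') :
    blockSpacing l ≤ dist (blockPoint l j) (blockPoint l' j') := by
  rw [Real.dist_eq]
  rcases lt_trichotomy l l' with h | rfl | h
  · refine le_trans ?_ (le_abs_self _)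
    linarith [blockPoint_add_blockSpacing_le_of_lt (j := j) hl' hj' h, blockSpacing_pos l']
  · have hindex : (1 : ℝ) ≤ |(j : ℝ) - j'| := by
      exact_mod_cast Int.one_le_abs (sub_ne_zero.2 (Nat.cast_injective.ne hne))
    calc blockSpacing l ≤ |(j : ℝ) - j'| * blockSpacing l :=
          le_mul_of_one_le_left (blockSpacing_pos l).le hindex
      _ = |blockPoint l j - blockPoint l j'| := by
          rw [blockPoint, blockPoint, add_sub_add_left_eq_sub, ← sub_mul, add_sub_add_right_eq_sub,
            abs_mul, abs_of_pos (blockSpacing_pos l)]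
  · refine le_trans ?_ (neg_le_abs _)
    linarith [blockPoint_add_blockSpacing_le_of_lt (j := j') hl hj h, blockSpacing_pos l']

variable {β : ℝ → ℝ}

theorem IsModulus.half_le_modulusGap_blockPoint (hβ : IsModulus β) {P Q : ℕ → Prop}
    (hPQ : ∀ j, P j → ¬ Q j) (hQ : (blockPoints Q).Nonempty) {l j : ℕ} (hl : 1 ≤ l)
    (hj : j ≤ 2 ^ l ^ 2) (hPj : P j) :
    β (blockSpacing l) / 2 ≤ modulusGap β (blockPoints P) (blockPoints Q) (blockPoint l j) := by
  refine hβ.half_le_modulusGap (blockPoint_mem_blockPoints hl hj hPj) hQ (blockSpacing_pos l).le ?_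
  rintro _ ⟨l', j', hl', hj', hQj', rfl⟩
  exact blockSpacing_le_dist_blockPoint hl hl' hj hj' fun h => hPQ j hPj (h ▸ hQj')

/-- A function of one variable with modulus of continuity `β` that changes sign between any two
consecutive points of a block. -/
def blockOscillation (β : ℝ → ℝ) : ℝ → ℝ :=
  modulusGap β (blockPoints Even) (blockPoints Odd)

theorem IsModulus.hasModulus_blockOscillation (hβ : IsModulus β) :
    HasModulus β (blockOscillation β) :=
  hβ.hasModulus_modulusGap _ _

theorem IsModulus.half_le_neg_one_pow_mul_blockOscillation (hβ : IsModulus β)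
    {l j : ℕ} (hl : 1 ≤ l) (hj : j ≤ 2 ^ l ^ 2) :
    β (blockSpacing l) / 2 ≤ (-1) ^ j * blockOscillation β (blockPoint l j) := by
  have hEven : (blockPoints Even).Nonempty :=
    ⟨_, blockPoint_mem_blockPoints le_rfl (Nat.zero_le _) Even.zero⟩
  have hOdd : (blockPoints Odd).Nonempty :=
    ⟨_, blockPoint_mem_blockPoints le_rfl Nat.one_le_two_pow odd_one⟩
  rw [blockOscillation]
  rcases j.even_or_odd with hj_even | hj_odd
  · rw [hj_even.neg_one_pow, one_mul]
    exact hβ.half_le_modulusGap_blockPoint (fun _ => Nat.not_odd_iff_even.2) hOdd hl hj hj_even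
  · rw [hj_odd.neg_one_pow, neg_one_mul, ← modulusGap_swap]
    exact hβ.half_le_modulusGap_blockPoint (fun _ => Nat.not_even_iff_odd.2) hEven hl hj hj_odd

theorem exists_nat_sub_two_le_of_two_lt {s : ℝ} (hs : 2 < s) :
    ∃ l : ℕ, 1 ≤ l ∧ s - 2 ≤ l ∧ (l : ℝ) + 1 < s := by
  have hceil : 2 < ⌈s⌉₊ := Nat.lt_ceil.2 (mod_cast hs)
  obtain ⟨l, hl⟩ := Nat.exists_eq_add_of_le' hceil.le
  refine ⟨l, by omega, ?_, ?_⟩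
  · have := Nat.le_ceil s
    rw [hl] at this
    push_cast at this
    linarith
  · exact_mod_cast (Nat.lt_ceil (n := l + 1)).1 (by omega)

theorem exists_lt_blockSpacing_and_le (m : ℕ) {ρ : ℝ} (hρ0 : 0 < ρ) (hρ : ρ < 1 / 16) :
    ∃ l : ℕ, 1 ≤ l ∧ ρ < blockSpacing l ∧
      (16 / ρ) ^ m * 2 ^ (-(4 * (m : ℝ)) * √|Real.logb 2 ρ|) ≤ (((2 ^ l ^ 2) ^ m : ℕ) : ℝ) := by
  have hlog : Real.logb 2 ρ < -4 := by
    rw [Real.logb_lt_iff_lt_rpow one_lt_two hρ0]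
    norm_num [Real.rpow_neg] at hρ ⊢
    exact hρ
  set s := √|Real.logb 2 ρ| with hs
  have hs_sq : s ^ 2 = -Real.logb 2 ρ := by
    rw [hs, Real.sq_sqrt (abs_nonneg _), abs_of_neg (by linarith)]
  have hρs : ρ = 2 ^ (-s ^ 2) := by
    rw [hs_sq, neg_neg, Real.rpow_logb two_pos one_lt_two.ne' hρ0]
  have hs2 : 2 < s := lt_of_pow_lt_pow_left₀ 2 (Real.sqrt_nonneg _) (by linarith)
  obtain ⟨l, hl, hsl, hls⟩ := exists_nat_sub_two_le_of_two_lt hs2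
  refine ⟨l, hl, ?_, ?_⟩
  · rw [hρs, blockSpacing_eq_rpow, Real.rpow_lt_rpow_left_iff one_lt_two, neg_lt_neg_iff]
    gcongr
  · calc (16 / ρ) ^ m * 2 ^ (-(4 * (m : ℝ)) * s)
        = 2 ^ ((s - 2) ^ 2 * m) := by
          have h16 : 16 / ρ = 2 ^ (4 + s ^ 2) := by
            rw [Real.rpow_add two_pos, hρs, Real.rpow_neg zero_le_two]
            norm_num
          rw [h16, ← Real.rpow_mul_natCast zero_le_two, ← Real.rpow_add two_pos]
          ring_nf
      _ ≤ 2 ^ ((l : ℝ) ^ 2 * m) := by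
          have hsq : (s - 2) ^ 2 ≤ (l : ℝ) ^ 2 := pow_le_pow_left₀ (sub_nonneg.2 hs2.le) hsl 2
          exact Real.rpow_le_rpow_of_exponent_le one_le_two
            (mul_le_mul_of_nonneg_right hsq m.cast_nonneg)
      _ = (((2 ^ l ^ 2) ^ m : ℕ) : ℝ) := by
          rw [Real.rpow_mul_natCast zero_le_two]
          norm_cast

end Blocks

/-- there is a continuous `f̃ : [0,1]^d → ℝ^m` admitting `β` as a modulus
of continuity such that for every `0 < ε < (1/(2√m))·β(2⁻⁵)`,
`N^{f̃}_{{0}}(ε) ≥ (16/Ψ_β(2√m ε))^m · 2^{-4m·√|log₂ Ψ_β(2√m ε)|}`. -/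
theorem stmt2 (d m : ℕ) (hm : 1 ≤ m) (hmd : m ≤ d)
    (β : ℝ → ℝ) (hβ : IsModulus β) :
    ∃ f : EuclideanSpace ℝ (Fin d) → EuclideanSpace ℝ (Fin m),
      ContinuousOn f (unitCube d) ∧
      (∀ x ∈ unitCube d, ∀ y ∈ unitCube d, dist (f x) (f y) ≤ β (dist x y)) ∧
      ∀ ε : ℝ, 0 < ε → ε < (1 / (2 * Real.sqrt m)) * β (2 ^ (-5 : ℤ)) →
        ENNReal.ofReal ((16 / Psi β (2 * Real.sqrt m * ε)) ^ m *
            2 ^ (-(4 * (m : ℝ)) * Real.sqrt |Real.logb 2 (Psi β (2 * Real.sqrt m * ε))|))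
          ≤ NW d m ((d : ℝ) - m) {0} f ε := by
  obtain ⟨n, rfl⟩ := Nat.exists_eq_add_of_le hmd
  have hsqrt : 0 < √(m : ℝ) := by positivity
  have hf := hβ.hasModulus_toLp_div_sqrt_card hβ.hasModulus_blockOscillation
    (Fin.castAdd n : Fin m → Fin (m + n))
  refine ⟨_, (hβ.continuous_of_hasModulus hf).continuousOn, fun x _ y _ => hf x y,
    fun ε hε hεβ => ?_⟩
  have hs : 2 * √m * ε < β (2 ^ (-5 : ℤ)) := by
    rwa [one_div, inv_mul_eq_div, lt_div_iff₀' (by positivity)] at hεβ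
  have hδ : (0 : ℝ) ≤ 2 ^ (-5 : ℤ) := by positivity
  obtain ⟨l, hl, hlt, hle⟩ := exists_lt_blockSpacing_and_le m
    (hβ.Psi_pos (by positivity) hδ hs) ((hβ.Psi_le hδ hs).trans_lt (by norm_num))
  have hspacing := hβ.lt_apply_of_Psi_lt hδ hs (blockSpacing_pos l).le hlt
  rw [Nat.cast_add, add_sub_cancel_left]
  refine (ENNReal.ofReal_le_ofReal hle).trans ?_
  rw [ENNReal.ofReal_natCast]
  refine natCast_pow_le_NW (strictMono_blockPoint l) (fun j => blockPoint_mem_Icc hl) ?_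
  intro j hj x _ i hxi
  have hosc := hβ.half_le_neg_one_pow_mul_blockOscillation hl hj
  simp only [hxi, Fintype.card_fin]
  rw [← mul_div_assoc, lt_div_iff₀ hsqrt]
  linarith
end
end

section
/- There is no pair (f, C) with f : [0,1] → ℝ continuous admitting β(s) = s as a modulus of continuity (i.e. f is 1-Lipschitz) and C ∈ (0,1] a constant, such that N^f_{{0}}(ε) ≥ C/ε for all sufficiently small ε > 0. Equivalently: for every 1-Lipschitz f : [0,1] → ℝ and every C ∈ (0,1], there exist arbitrarily small ε > 0 with N^f_{{0}}(ε) < C/ε. -/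
open MeasureTheory ENNReal

noncomputable section

/-- `N^f_{{0}}(ε)`: the infimum of the number of zeros (0-dimensional Hausdorff measure,
i.e. counting measure) over all continuous `h : [0,1] → ℝ` with `‖h - f‖_{C⁰} ≤ ε`. -/
def N0 (f : ℝ → ℝ) (ε : ℝ) : ℝ≥0∞ :=
  ⨅ (h : ℝ → ℝ) (_ : ContinuousOn h (Set.Icc 0 1))
    (_ : ∀ x ∈ Set.Icc (0 : ℝ) 1, |h x - f x| ≤ ε),
    μH[0] {x ∈ Set.Icc (0 : ℝ) 1 | h x = 0}

/-!
For a continuous function `f` of bounded variation, Banach's indicatrix inequality bounds the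
integral over `y` of the number of solutions of `f x = y` by the total variation of `f`. Since
`f - ε` is an admissible competitor in the infimum defining `N0 f ε`, that number of solutions at
height `ε` dominates `N0 f ε`, and so `N0 f` is integrable on `(0, ∞)`. The function `C / ε` is not
integrable near `0`, so it cannot be a lower bound of `N0 f` there.
-/

open Set Filter Topology
open scoped NNReal

theorem hausdorffMeasure_zero_apply {X : Type*} [EMetricSpace X] [MeasurableSpace X]
    [BorelSpace X] (s : Set X) : μH[0] s = s.encard := by
  rcases s.finite_or_infinite with hs | hs
  · lift s to Finset X using hs
    rw [← sum_measure_singleton]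
    simp [Measure.hausdorffMeasure_zero_singleton]
  · rw [hs.encard_eq, ENat.toENNReal_top]
    exact hs.meas_eq_top
      ⟨1, one_ne_zero, fun x _ => (Measure.hausdorffMeasure_zero_singleton x).ge⟩

theorem encard_le_of_forall_finset_card_le {α : Type*} {s : Set α} {c : ℝ≥0∞}
    (h : ∀ t : Finset α, ↑t ⊆ s → (t.card : ℝ≥0∞) ≤ c) : (s.encard : ℝ≥0∞) ≤ c := by
  rcases s.finite_or_infinite with hs | hs
  · lift s to Finset α using hs
    simpa using h s subset_rfl
  · rw [hs.encard_eq, ENat.toENNReal_top, ← ENNReal.iSup_natCast]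
    refine iSup_le fun n => ?_
    obtain ⟨t, hts, rfl⟩ := hs.exists_subset_card_eq n
    exact h t hts

section CellCount

variable {α β : Type*} [LinearOrder α]

/-- The number of the cells `[u k, u (k + 1)]`, `k < n`, on which `f` takes the value `y`. It
approximates the Banach indicatrix of `f`, and is written as a sum of indicators so that it can be
integrated in `y`. -/
def cellCount (f : α → β) (u : ℕ → α) (n : ℕ) (y : β) : ℝ≥0∞ :=
  ∑ k ∈ Finset.range n, (f '' Icc (u k) (u (k + 1))).indicator 1 y

theorem exists_mem_Icc_succ_of_mem_Icc {u : ℕ → α} {n : ℕ} (hn : 0 < n) {x : α}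
    (hx : x ∈ Icc (u 0) (u n)) : ∃ k < n, x ∈ Icc (u k) (u (k + 1)) := by
  induction n, hn using Nat.le_induction with
  | base => exact ⟨0, one_pos, hx⟩
  | succ n _ ih =>
    rcases le_total x (u n) with hxn | hxn
    · obtain ⟨k, hk, hxk⟩ := ih ⟨hx.1, hxn⟩
      exact ⟨k, hk.trans n.lt_succ_self, hxk⟩
    · exact ⟨n, n.lt_succ_self, hxn, hx.2⟩

theorem card_le_cellCount {f : α → β} {u : ℕ → α} {n : ℕ} (hn : 0 < n) {y : β} {t : Finset α}
    (ht : ↑t ⊆ {x ∈ Icc (u 0) (u n) | f x = y})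
    (hsep : ∀ k < n, (↑t ∩ Icc (u k) (u (k + 1))).Subsingleton) :
    (t.card : ℝ≥0∞) ≤ cellCount f u n y := by
  let cell (k : ℕ) : Finset α := {x ∈ t | x ∈ Icc (u k) (u (k + 1))}
  have hcover : t ⊆ (Finset.range n).biUnion cell := by
    intro x hx
    obtain ⟨k, hk, hxk⟩ := exists_mem_Icc_succ_of_mem_Icc hn (ht hx).1
    exact Finset.mem_biUnion.2 ⟨k, Finset.mem_range.2 hk, Finset.mem_filter.2 ⟨hx, hxk⟩⟩
  have hcell : ∀ k ∈ Finset.range n,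
      ((cell k).card : ℝ≥0∞) ≤ (f '' Icc (u k) (u (k + 1))).indicator 1 y := by
    intro k hk
    rcases (cell k).eq_empty_or_nonempty with hempty | ⟨x, hx⟩
    · simp only [hempty, Finset.card_empty, Nat.cast_zero, zero_le]
    · obtain ⟨hxt, hxk⟩ := Finset.mem_filter.1 hx
      rw [indicator_of_mem (show y ∈ f '' _ from ⟨x, hxk, (ht hxt).2⟩), Pi.one_apply,
        Nat.cast_le_one, Finset.card_le_one_iff_subsingleton, Finset.coe_filter]
      exact hsep k (Finset.mem_range.1 hk)
  calc (t.card : ℝ≥0∞)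
      ≤ ∑ k ∈ Finset.range n, ((cell k).card : ℝ≥0∞) :=
        mod_cast (Finset.card_le_card hcover).trans Finset.card_biUnion_le
    _ ≤ cellCount f u n y := Finset.sum_le_sum hcell

theorem volume_image_le_eVariationOn (f : α → ℝ) (s : Set α) :
    volume (f '' s) ≤ eVariationOn f s := by
  refine (Real.volume_le_diam _).trans (Metric.ediam_le ?_)
  rintro _ ⟨x, hx, rfl⟩ _ ⟨y, hy, rfl⟩
  exact eVariationOn.edist_le f hx hy

variable [TopologicalSpace α] [CompactIccSpace α] {f : α → ℝ} {u : ℕ → α} {n : ℕ}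

theorem measurableSet_image_Icc_succ (hf : ContinuousOn f (Icc (u 0) (u n))) (hu : Monotone u)
    {k : ℕ} (hk : k < n) : MeasurableSet (f '' Icc (u k) (u (k + 1))) :=
  (isCompact_Icc.image_of_continuousOn
    (hf.mono (Icc_subset_Icc (hu k.zero_le) (hu hk)))).measurableSet

theorem measurable_cellCount (hf : ContinuousOn f (Icc (u 0) (u n))) (hu : Monotone u) :
    Measurable (cellCount f u n) :=
  Finset.measurable_fun_sum _ fun _ hk =>
    measurable_one.indicator (measurableSet_image_Icc_succ hf hu (Finset.mem_range.1 hk))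

theorem lintegral_cellCount_le_eVariationOn (hf : ContinuousOn f (Icc (u 0) (u n)))
    (hu : Monotone u) : ∫⁻ y, cellCount f u n y ≤ eVariationOn f (Icc (u 0) (u n)) := by
  have hmeas : ∀ k ∈ Finset.range n, MeasurableSet (f '' Icc (u k) (u (k + 1))) := fun _ hk =>
    measurableSet_image_Icc_succ hf hu (Finset.mem_range.1 hk)
  calc ∫⁻ y, cellCount f u n y
      = ∑ k ∈ Finset.range n, volume (f '' Icc (u k) (u (k + 1))) := by
        unfold cellCount
        rw [lintegral_finsetSum' _ fun k hk => (measurable_one.indicator (hmeas k hk)).aemeasurable]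
        exact Finset.sum_congr rfl fun k hk => lintegral_indicator_one (hmeas k hk)
    _ ≤ ∑ k ∈ Finset.range n, eVariationOn f (Icc (u k) (u (k + 1))) :=
        Finset.sum_le_sum fun _ _ => volume_image_le_eVariationOn f _
    _ = eVariationOn f (Icc (u 0) (u n)) := eVariationOn.sum' f hu

end CellCount

section BanachIndicatrix

variable {a b : ℝ} {f : ℝ → ℝ}

/-- The points of the partition of `[a, b]` into `n + 1` cells of equal length. The index `k` is
not truncated, so that the points past `k = n + 1` continue the progression beyond `b`. -/
def uniformPartition (a b : ℝ) (n k : ℕ) : ℝ :=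
  a + k * ((b - a) / (n + 1))

@[simp]
theorem uniformPartition_zero (a b : ℝ) (n : ℕ) : uniformPartition a b n 0 = a := by
  simp [uniformPartition]

@[simp]
theorem uniformPartition_last (a b : ℝ) (n : ℕ) : uniformPartition a b n (n + 1) = b := by
  have : (n : ℝ) + 1 ≠ 0 := n.cast_add_one_ne_zero
  simp only [uniformPartition, Nat.cast_add, Nat.cast_one]
  field_simp
  ring

theorem uniformPartition_succ_sub (a b : ℝ) (n k : ℕ) :
    uniformPartition a b n (k + 1) - uniformPartition a b n k = (b - a) / (n + 1) := by
  simp only [uniformPartition, Nat.cast_add, Nat.cast_one]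
  ring

theorem monotone_uniformPartition (hab : a ≤ b) (n : ℕ) : Monotone (uniformPartition a b n) := by
  refine monotone_nat_of_le_succ fun k => sub_nonneg.1 ?_
  rw [uniformPartition_succ_sub]
  exact div_nonneg (sub_nonneg.2 hab) n.cast_add_one_pos.le

theorem eventually_card_le_cellCount_uniformPartition {y : ℝ} {t : Finset ℝ}
    (ht : ↑t ⊆ {x ∈ Icc a b | f x = y}) :
    ∀ᶠ n in atTop, (t.card : ℝ≥0∞) ≤ cellCount f (uniformPartition a b n) (n + 1) y := by
  have hmesh : Tendsto (fun n : ℕ => ENNReal.ofReal ((b - a) / (n + 1))) atTop (𝓝 0) := by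
    simpa using ENNReal.tendsto_ofReal
      ((tendsto_const_div_atTop_nhds_zero_nat (b - a)).comp (tendsto_add_atTop_nat 1))
  filter_upwards [hmesh.eventually_lt_const t.finite_toSet.einfsep_pos] with n hn
  refine card_le_cellCount n.succ_pos (by simpa using ht) fun k _ x hx x' hx' => ?_
  by_contra hne
  refine hn.not_ge ?_
  calc (t : Set ℝ).einfsep ≤ edist x x' := einfsep_le_edist_of_mem hx.1 hx'.1 hne
    _ ≤ Metric.ediam (Icc (uniformPartition a b n k) (uniformPartition a b n (k + 1))) :=
        Metric.edist_le_ediam_of_mem hx.2 hx'.2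
    _ = ENNReal.ofReal ((b - a) / (n + 1)) := by rw [Real.ediam_Icc, uniformPartition_succ_sub]

theorem encard_fiber_le_liminf_cellCount (a b : ℝ) (f : ℝ → ℝ) (y : ℝ) :
    ({x ∈ Icc a b | f x = y}.encard : ℝ≥0∞) ≤
      liminf (fun n => cellCount f (uniformPartition a b n) (n + 1) y) atTop :=
  encard_le_of_forall_finset_card_le fun _ ht =>
    le_liminf_of_le (h := eventually_card_le_cellCount_uniformPartition ht)

theorem lintegral_encard_fiber_le_eVariationOn (hf : ContinuousOn f (Icc a b)) :
    ∫⁻ y, ({x ∈ Icc a b | f x = y}.encard : ℝ≥0∞) ≤ eVariationOn f (Icc a b) := by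
  rcases lt_or_ge b a with hba | hab
  · simp [Icc_eq_empty_of_lt hba]
  have hcont (n : ℕ) :
      ContinuousOn f (Icc (uniformPartition a b n 0) (uniformPartition a b n (n + 1))) := by
    simpa using hf
  have hmono := monotone_uniformPartition hab
  calc ∫⁻ y, ({x ∈ Icc a b | f x = y}.encard : ℝ≥0∞)
      ≤ ∫⁻ y, liminf (fun n => cellCount f (uniformPartition a b n) (n + 1) y) atTop :=
        lintegral_mono (encard_fiber_le_liminf_cellCount a b f)
    _ ≤ liminf (fun n => ∫⁻ y, cellCount f (uniformPartition a b n) (n + 1) y) atTop :=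
        lintegral_liminf_le fun n => measurable_cellCount (hcont n) (hmono n)
    _ ≤ liminf (fun _ : ℕ => eVariationOn f (Icc a b)) atTop :=
        liminf_le_liminf (.of_forall fun n => by
          simpa using lintegral_cellCount_le_eVariationOn (hcont n) (hmono n))
    _ = eVariationOn f (Icc a b) := liminf_const _

end BanachIndicatrix

theorem lintegral_Ioo_ofReal_div_eq_top {C r : ℝ} (hC : 0 < C) (hr : 0 < r) :
    ∫⁻ y in Ioo 0 r, ENNReal.ofReal (C / y) = ⊤ := by
  by_contra hfin
  have hint : IntegrableOn (fun y : ℝ => C / y) (Ioo 0 r) :=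
    (lintegral_ofReal_ne_top_iff_integrable (by fun_prop)
      (ae_restrict_of_forall_mem measurableSet_Ioo fun y hy => div_nonneg hC.le hy.1.le)).1 hfin
  have hrpow : IntegrableOn (fun y : ℝ => y ^ (-1 : ℝ)) (Ioo 0 r) := by
    simpa [IntegrableOn, Real.rpow_neg_one, ← mul_div_assoc, hC.ne'] using hint.const_mul C⁻¹
  exact lt_irrefl _ ((intervalIntegral.integrableOn_Ioo_rpow_iff hr).1 hrpow)

section N0

variable {f : ℝ → ℝ}

theorem N0_le_encard_fiber (hf : ContinuousOn f (Icc 0 1)) {ε : ℝ} (hε : 0 ≤ ε) :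
    N0 f ε ≤ {x ∈ Icc (0 : ℝ) 1 | f x = ε}.encard := by
  have hclose : ∀ x ∈ Icc (0 : ℝ) 1, |f x - ε - f x| ≤ ε := fun x _ => by simp [abs_of_nonneg hε]
  calc N0 f ε ≤ μH[0] {x ∈ Icc (0 : ℝ) 1 | f x - ε = 0} :=
        iInf₂_le_of_le (fun x => f x - ε) (hf.sub continuousOn_const) (iInf_le _ hclose)
    _ = {x ∈ Icc (0 : ℝ) 1 | f x = ε}.encard := by
        simp only [hausdorffMeasure_zero_apply, sub_eq_zero]

theorem lintegral_N0_le_eVariationOn (hf : ContinuousOn f (Icc 0 1)) :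
    ∫⁻ ε in Ioi 0, N0 f ε ≤ eVariationOn f (Icc 0 1) :=
  calc ∫⁻ ε in Ioi 0, N0 f ε
      ≤ ∫⁻ ε in Ioi 0, ({x ∈ Icc (0 : ℝ) 1 | f x = ε}.encard : ℝ≥0∞) :=
        setLIntegral_mono' measurableSet_Ioi fun _ hε => N0_le_encard_fiber hf (le_of_lt hε)
    _ ≤ ∫⁻ ε, ({x ∈ Icc (0 : ℝ) 1 | f x = ε}.encard : ℝ≥0∞) := setLIntegral_le_lintegral _ _
    _ ≤ eVariationOn f (Icc 0 1) := lintegral_encard_fiber_le_eVariationOn hf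

end N0

theorem boundedVariationOn_Icc_of_lipschitzOnWith {E : Type*} [PseudoEMetricSpace E] {f : ℝ → E}
    {K : ℝ≥0} {a b : ℝ} (hf : LipschitzOnWith K f (Icc a b)) : BoundedVariationOn f (Icc a b) :=
  hf.comp_boundedVariationOn (mapsTo_id _) (.id_Icc a b)

theorem stmt5_general (f : ℝ → ℝ) (hf : ContinuousOn f (Icc 0 1))
    (hbv : BoundedVariationOn f (Icc 0 1)) (C : ℝ) (hC0 : 0 < C) :
    ∀ ε₀ : ℝ, 0 < ε₀ → ∃ ε : ℝ, 0 < ε ∧ ε < ε₀ ∧ N0 f ε < ENNReal.ofReal (C / ε) := by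
  intro ε₀ hε₀
  by_contra! hlower
  have hfin : ∫⁻ ε in Ioo 0 ε₀, ENNReal.ofReal (C / ε) < ⊤ :=
    calc ∫⁻ ε in Ioo 0 ε₀, ENNReal.ofReal (C / ε)
        ≤ ∫⁻ ε in Ioo 0 ε₀, N0 f ε :=
          setLIntegral_mono' measurableSet_Ioo fun ε hε => hlower ε hε.1 hε.2
      _ ≤ ∫⁻ ε in Ioi 0, N0 f ε := lintegral_mono_set Ioo_subset_Ioi_self
      _ ≤ eVariationOn f (Icc 0 1) := lintegral_N0_le_eVariationOn hf
      _ < ⊤ := hbv.lt_top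
  exact hfin.ne (lintegral_Ioo_ofReal_div_eq_top hC0 hε₀)

/-- there is no 1-Lipschitz `f : [0,1] → ℝ` and constant `C ∈ (0,1]` with
`N^f_{{0}}(ε) ≥ C/ε` for all sufficiently small `ε > 0`; equivalently, for every
1-Lipschitz `f` and every `C ∈ (0,1]` there are arbitrarily small `ε > 0` with
`N^f_{{0}}(ε) < C/ε`. -/
theorem stmt5 (f : ℝ → ℝ) (hf : ContinuousOn f (Set.Icc 0 1))
    (hlip : ∀ x ∈ Set.Icc (0 : ℝ) 1, ∀ y ∈ Set.Icc (0 : ℝ) 1, |f x - f y| ≤ |x - y|)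
    (C : ℝ) (hC0 : 0 < C) (hC1 : C ≤ 1) :
    ∀ ε₀ : ℝ, 0 < ε₀ → ∃ ε : ℝ, 0 < ε ∧ ε < ε₀ ∧ N0 f ε < ENNReal.ofReal (C / ε) := by
  have hlip' : LipschitzOnWith 1 f (Icc 0 1) :=
    .of_dist_le_mul (by simpa [Real.dist_eq] using hlip)
  exact stmt5_general f hf (boundedVariationOn_Icc_of_lipschitzOnWith hlip') C hC0
end
end
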